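/- Separated exact reduction under Assumption (A2): suppose each conditional map factors as M_k = E ∘ K_k with E and K_k linear maps on the n×n complex matrices, and suppose the non-observable subspace N (of the CE with maps M_k and output C) is E-invariant. Let R : Matrix n n ℂ →ₗ[ℂ] W and J : W →ₗ[ℂ] Matrix n n ℂ with R ∘ J = id_W and ker(J ∘ R) ⊆ N. Define Ǩ_k = R ∘ K_k ∘ J, Ě = R ∘ E ∘ J, and Č = C ∘ J. Then for every matrix ρ and every word w = [k_0, …, k_t] over Ω, C(M_w ρ) = Č( (Ě ∘ Ǩ_{k_t}) ∘ ⋯ ∘ (Ě ∘ Ǩ_{k_0}) (R ρ) ). -/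

import Mathlib

open Matrix

/-- Composition of the conditional maps along a word `w = [k₀, …, k_t]`:
`Mword M w = M_{k_t} ∘ ⋯ ∘ M_{k₀}` (the empty word gives the identity). -/
def Mword {Ω V : Type*} [AddCommMonoid V] [Module ℂ V]
    (M : Ω → V →ₗ[ℂ] V) : List Ω → (V →ₗ[ℂ] V)
  | [] => LinearMap.id
  | k :: w => (Mword M w).comp (M k)

/-- The non-observable subspace `N = {X | C (M_w X) = 0 for every word w}`. -/
def NonObs {Ω : Type*} {n : ℕ} {Y : Type*} [AddCommGroup Y] [Module ℂ Y]
    (M : Ω → Matrix (Fin n) (Fin n) ℂ →ₗ[ℂ] Matrix (Fin n) (Fin n) ℂ)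
    (C : Matrix (Fin n) (Fin n) ℂ →ₗ[ℂ] Y) : Set (Matrix (Fin n) (Fin n) ℂ) :=
  {X | ∀ w : List Ω, C (Mword M w X) = 0}

/-!
Because `R ∘ J = id` and `ker (J ∘ R) ⊆ N`, every `X` agrees with `J (R X)` modulo the
non-observable subspace `N`, so the two produce the same outputs along every word. As `N` is
`E`-invariant, inserting `J ∘ R` both before and after `E` changes `E ∘ K k` only modulo `N`.
Hence `J` intertwines the reduced maps with the `M k` modulo `N`, and the outputs of the two models
agree by induction on the word.
-/

section StableSubmodule

variable {𝕜 V W : Type*} [Ring 𝕜] [AddCommGroup V] [Module 𝕜 V] [AddCommGroup W] [Module 𝕜 W]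
  {N : Submodule 𝕜 V}

theorem sub_apply_mem_of_ker_comp_le {R : V →ₗ[𝕜] W} {J : W →ₗ[𝕜] V}
    (hRJ : R ∘ₗ J = LinearMap.id) (hker : LinearMap.ker (J ∘ₗ R) ≤ N) (X : V) :
    X - J (R X) ∈ N := by
  have hRJR : R (J (R X)) = R X := LinearMap.congr_fun hRJ (R X)
  apply hker
  rw [LinearMap.mem_ker, LinearMap.comp_apply, map_sub, hRJR, sub_self, map_zero]

theorem apply_sub_compression_apply_mem {E : V →ₗ[𝕜] V} {P : V → V} (hE : ∀ X ∈ N, E X ∈ N)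
    (hP : ∀ X, X - P X ∈ N) (X : V) :
    E X - P (E (P X)) ∈ N := by
  have hbefore : E X - E (P X) ∈ N := map_sub E X (P X) ▸ hE _ (hP X)
  have hafter : E (P X) - P (E (P X)) ∈ N := hP (E (P X))
  simpa only [sub_add_sub_cancel] using N.add_mem hbefore hafter

end StableSubmodule

section ConditionalEvolution

variable {Ω V W Y : Type*} [AddCommGroup V] [Module ℂ V] [AddCommGroup W] [Module ℂ W]
  [AddCommGroup Y] [Module ℂ Y]

/-- The non-observable subspace of a conditional evolution on an arbitrary complex vector space,
as a submodule; on matrices its underlying set is `NonObs M C`. -/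
def nonObservable (M : Ω → V →ₗ[ℂ] V) (C : V →ₗ[ℂ] Y) : Submodule ℂ V :=
  ⨅ w : List Ω, LinearMap.ker (C ∘ₗ Mword M w)

theorem mem_nonObservable {M : Ω → V →ₗ[ℂ] V} {C : V →ₗ[ℂ] Y} {X : V} :
    X ∈ nonObservable M C ↔ ∀ w : List Ω, C (Mword M w X) = 0 := by
  simp only [nonObservable, Submodule.mem_iInf, LinearMap.mem_ker, LinearMap.comp_apply]

theorem coe_nonObservable {n : ℕ}
    (M : Ω → Matrix (Fin n) (Fin n) ℂ →ₗ[ℂ] Matrix (Fin n) (Fin n) ℂ)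
    (C : Matrix (Fin n) (Fin n) ℂ →ₗ[ℂ] Y) :
    (nonObservable M C : Set (Matrix (Fin n) (Fin n) ℂ)) = NonObs M C :=
  Set.ext fun _ => mem_nonObservable

theorem output_eq_of_sub_mem_nonObservable {M : Ω → V →ₗ[ℂ] V} {C : V →ₗ[ℂ] Y} {X X' : V}
    (h : X - X' ∈ nonObservable M C) (w : List Ω) :
    C (Mword M w X) = C (Mword M w X') := by
  rw [← sub_eq_zero, ← map_sub, ← map_sub]
  exact mem_nonObservable.mp h w

theorem output_eq_of_intertwines_mod_nonObservable {M : Ω → V →ₗ[ℂ] V} {C : V →ₗ[ℂ] Y}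
    {M' : Ω → W →ₗ[ℂ] W} {J : W →ₗ[ℂ] V}
    (hJ : ∀ k x, M k (J x) - J (M' k x) ∈ nonObservable M C) (w : List Ω) (x : W) :
    C (Mword M w (J x)) = C (J (Mword M' w x)) := by
  induction w generalizing x with
  | nil => rfl
  | cons k w ih =>
    calc C (Mword M w (M k (J x)))
        = C (Mword M w (J (M' k x))) := output_eq_of_sub_mem_nonObservable (hJ k x) w
      _ = C (J (Mword M' w (M' k x))) := ih (M' k x)

theorem separated_reduction_A2_general {M K : Ω → V →ₗ[ℂ] V} {E : V →ₗ[ℂ] V} {C : V →ₗ[ℂ] Y}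
    (hfac : ∀ k, M k = E ∘ₗ K k)
    (hE : ∀ X ∈ nonObservable M C, E X ∈ nonObservable M C)
    {R : V →ₗ[ℂ] W} {J : W →ₗ[ℂ] V} (hJR : ∀ X, X - J (R X) ∈ nonObservable M C)
    (ρ : V) (w : List Ω) :
    C (Mword M w ρ) =
      C (J (Mword (fun k => (R ∘ₗ E ∘ₗ J) ∘ₗ (R ∘ₗ K k ∘ₗ J)) w (R ρ))) := by
  have hintertwines : ∀ k x,
      M k (J x) - J (R (E (J (R (K k (J x)))))) ∈ nonObservable M C := fun k x => by
    rw [hfac k]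
    exact apply_sub_compression_apply_mem (P := J ∘ₗ R) hE hJR (K k (J x))
  calc C (Mword M w ρ)
      = C (Mword M w (J (R ρ))) := output_eq_of_sub_mem_nonObservable (hJR ρ) w
    _ = _ := output_eq_of_intertwines_mod_nonObservable hintertwines w (R ρ)

end ConditionalEvolution

/-- Separated exact reduction under Assumption (A2): if `M_k = E ∘ K_k`, the
non-observable subspace `N` is `E`-invariant, `R ∘ J = id` and `ker (J ∘ R) ⊆ N`,
then the reduced model with separately reduced dynamics `Ě = R ∘ E ∘ J` and
conditioning `Ǩ_k = R ∘ K_k ∘ J` reproduces the conditioned output. -/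
theorem separated_reduction_A2 {Ω : Type*} [Fintype Ω] {n : ℕ} (hn : 1 ≤ n)
    {Y : Type*} [AddCommGroup Y] [Module ℂ Y] [FiniteDimensional ℂ Y]
    {W : Type*} [AddCommGroup W] [Module ℂ W] [FiniteDimensional ℂ W]
    (M K : Ω → Matrix (Fin n) (Fin n) ℂ →ₗ[ℂ] Matrix (Fin n) (Fin n) ℂ)
    (E : Matrix (Fin n) (Fin n) ℂ →ₗ[ℂ] Matrix (Fin n) (Fin n) ℂ)
    (C : Matrix (Fin n) (Fin n) ℂ →ₗ[ℂ] Y)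
    (hfac : ∀ k, M k = E.comp (K k))
    (hEinv : ∀ X ∈ NonObs M C, E X ∈ NonObs M C)
    (R : Matrix (Fin n) (Fin n) ℂ →ₗ[ℂ] W) (J : W →ₗ[ℂ] Matrix (Fin n) (Fin n) ℂ)
    (hRJ : R.comp J = LinearMap.id)
    (hker : ∀ X, J (R X) = 0 → X ∈ NonObs M C) :
    ∀ (ρ : Matrix (Fin n) (Fin n) ℂ) (w : List Ω),
      C (Mword M w ρ) =
        C (J (Mword
          (fun k => (R.comp (E.comp J)).comp (R.comp ((K k).comp J))) w (R ρ))) := by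
  simp only [← coe_nonObservable, SetLike.mem_coe] at hEinv hker
  exact separated_reduction_A2_general hfac hEinv (sub_apply_mem_of_ker_comp_le hRJ hker)
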